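/- Let b > 0, γ = 1 + 16b/3, and let ω = (ω₀, ω₁) ∈ Ω. Then Q₁(φ_ω) = γ^{−3/2}·( √(γ(4ω₀ − ω₁²)) − 2(γ−1)·ω₁·arctan((ω₁ + √(ω₁² + γ(4ω₀ − ω₁²)))/√(γ(4ω₀ − ω₁²))) ). -/

import Mathlib

/-! The substitution `φ = φ̃ e^{iθ}` with `θ' = ω₁/2 - φ̃²/4` gives
`i φ' conj φ = (φ̃⁴/4 - (ω₁/2) φ̃²) + (i/2) (φ̃²)'`, so that
`Q₁(φ) = (1/8) ∫ φ̃⁴ - (ω₁/4) ∫ φ̃²`.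

Here `φ̃² = 2 (4ω₀ - ω₁²) g` with the kernel `g(x) = 1 / (R cosh (s x) - w)`, where `w = ω₁`,
`s = √(4ω₀ - ω₁²)`, `R = √(ω₁² + γ s²)`; put `k = √(R² - w²) = √γ s`. An antiderivative of `g` is
`2/(s k) · arctan ((R + w)/k · tanh (s x / 2))` (`hasDerivAt_coshKerPrim`), which yields `∫ g`
(`integral_coshKer`) as well as the derivative of the phase. The function
`sinh (s x) / (R cosh (s x) - w)` has derivative `(s/R) (k² g² - w g)`; integrating this identity
expresses `∫ g²` through `∫ g` (`integral_coshKer_sq`). -/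

open MeasureTheory

noncomputable section

/-- γ = 1 + 16b/3 -/
def gam (b : ℝ) : ℝ := 1 + 16 * b / 3

/-- The real-valued profile ˜φ_ω. -/
def phit (b ω₀ ω₁ x : ℝ) : ℝ :=
  Real.sqrt (2 * (4 * ω₀ - ω₁ ^ 2) /
    (-ω₁ + Real.sqrt (ω₁ ^ 2 + gam b * (4 * ω₀ - ω₁ ^ 2)) *
      Real.cosh (Real.sqrt (4 * ω₀ - ω₁ ^ 2) * x)))

/-- The complex-valued solitary wave profile φ_ω. -/
def phi (b ω₀ ω₁ : ℝ) (x : ℝ) : ℂ :=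
  (phit b ω₀ ω₁ x : ℂ) *
    Complex.exp (Complex.I * (ω₁ / 2) * x -
      (Complex.I / 4) * ((∫ η in Set.Iic x, (phit b ω₀ ω₁ η) ^ 2) : ℝ))

/-- Q₀(v) = (1/2)∫|v|². -/
def Q0 (v : ℝ → ℂ) : ℝ := (1 / 2) * ∫ x : ℝ, ‖v x‖ ^ 2

/-- Q₁(v) = (1/2) Re ∫ i v' conj v. -/
def Q1 (v : ℝ → ℂ) : ℝ :=
  (1 / 2) * (∫ x : ℝ, Complex.I * deriv v x * (starRingEnd ℂ) (v x)).re

/-- P(v) = Re ∫ i |v|² v' conj v. -/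
def Pfun (v : ℝ → ℂ) : ℝ :=
  (∫ x : ℝ, Complex.I * (‖v x‖ : ℂ) ^ 2 * deriv v x * (starRingEnd ℂ) (v x)).re

/-- The energy E. -/
def Efun (b : ℝ) (v : ℝ → ℂ) : ℝ :=
  (1 / 2) * (∫ x : ℝ, ‖deriv v x‖ ^ 2) - (1 / 4) * Pfun v -
    (b / 6) * ∫ x : ℝ, ‖v x‖ ^ 6

/-- L_ω(v). -/
def Lfun (ω₀ ω₁ : ℝ) (v : ℝ → ℂ) : ℝ :=
  (∫ x : ℝ, ‖deriv v x‖ ^ 2) + ω₀ * (∫ x : ℝ, ‖v x‖ ^ 2) +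
    ω₁ * (∫ x : ℝ, Complex.I * deriv v x * (starRingEnd ℂ) (v x)).re

/-- The action S_ω. -/
def Sfun (b ω₀ ω₁ : ℝ) (v : ℝ → ℂ) : ℝ :=
  (1 / 2) * Lfun ω₀ ω₁ v - (1 / 4) * Pfun v - (b / 6) * ∫ x : ℝ, ‖v x‖ ^ 6

/-- The Nehari functional K_ω. -/
def Kfun (b ω₀ ω₁ : ℝ) (v : ℝ → ℂ) : ℝ :=
  Lfun ω₀ ω₁ v - Pfun v - b * ∫ x : ℝ, ‖v x‖ ^ 6

/-- v ∈ H¹(ℝ): v differentiable with v and v' square-integrable. -/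
def H1 (v : ℝ → ℂ) : Prop :=
  Differentiable ℝ v ∧ Integrable (fun x : ℝ => ‖v x‖ ^ 2) ∧
    Integrable (fun x : ℝ => ‖deriv v x‖ ^ 2)

/-- The function g from Remark 1. -/
def gfun (b ξ : ℝ) : ℝ :=
  (2 * (gam b - 1) / ξ) * Real.arctan ((1 + Real.sqrt (1 + ξ ^ 2)) / ξ)


open Filter Topology

/-- The kernel `1 / (R cosh (s x) - w)`, to which `φ̃²` is proportional. -/
def coshKer (R w s x : ℝ) : ℝ := (R * Real.cosh (s * x) - w)⁻¹

/-- An antiderivative of `coshKer R w s` when `k = √(R² - w²)`. -/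
def coshKerPrim (R w s k x : ℝ) : ℝ :=
  2 / (s * k) * Real.arctan ((R + w) / k * Real.tanh (s / 2 * x))

lemma tendsto_cosh_atTop' : Tendsto Real.cosh atTop atTop := by
  refine tendsto_atTop_mono (fun x => ?_)
    (Real.tendsto_exp_atTop.const_mul_atTop (by norm_num : (0 : ℝ) < 1 / 2))
  rw [Real.cosh_eq]
  linarith [Real.exp_pos (-x)]

lemma tendsto_tanh_atTop' : Tendsto Real.tanh atTop (𝓝 1) := by
  have h : Tendsto (fun x : ℝ => 1 - Real.exp (-x) * (Real.cosh x)⁻¹) atTop (𝓝 (1 - 0 * 0)) :=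
    tendsto_const_nhds.sub
      ((Real.tendsto_exp_neg_atTop_nhds_zero).mul tendsto_cosh_atTop'.inv_tendsto_atTop)
  simp only [mul_zero, sub_zero] at h
  refine h.congr fun x => ?_
  have hc := Real.cosh_pos x
  rw [Real.tanh_eq_sinh_div_cosh, ← Real.cosh_sub_sinh]
  field_simp
  ring

/-- An odd function with limit `l` at `+∞` has limit `-l` at `-∞`. -/
lemma tendsto_atBot_of_odd {f : ℝ → ℝ} {l : ℝ} (hodd : ∀ x, f (-x) = -f x)
    (h : Tendsto f atTop (𝓝 l)) : Tendsto f atBot (𝓝 (-l)) := by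
  refine (h.comp tendsto_neg_atBot_atTop).neg.congr fun x => ?_
  simp [hodd]

section Kernel

variable {R w s k : ℝ}

lemma abs_lt_of_param (hR : 0 < R) (hk : 0 < k) (hkk : k ^ 2 = R ^ 2 - w ^ 2) : |w| < R :=
  abs_lt_of_sq_lt_sq (by nlinarith) hR.le

lemma denom_ge (hR : 0 < R) (hk : 0 < k) (hkk : k ^ 2 = R ^ 2 - w ^ 2) (u : ℝ) :
    (R - |w|) * Real.cosh u ≤ R * Real.cosh u - w := by
  have := abs_lt_of_param hR hk hkk
  nlinarith [Real.one_le_cosh u, le_abs_self w, abs_nonneg w]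

lemma denom_pos (hR : 0 < R) (hk : 0 < k) (hkk : k ^ 2 = R ^ 2 - w ^ 2) (u : ℝ) :
    0 < R * Real.cosh u - w :=
  (mul_pos (sub_pos.2 (abs_lt_of_param hR hk hkk)) (Real.cosh_pos u)).trans_le
    (denom_ge hR hk hkk u)

lemma coshKer_pos (hR : 0 < R) (hk : 0 < k) (hkk : k ^ 2 = R ^ 2 - w ^ 2) (x : ℝ) :
    0 < coshKer R w s x := inv_pos.2 (denom_pos hR hk hkk _)

lemma cosh_mul_coshKer_le (hR : 0 < R) (hk : 0 < k) (hkk : k ^ 2 = R ^ 2 - w ^ 2) (x : ℝ) :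
    Real.cosh (s * x) * coshKer R w s x ≤ (R - |w|)⁻¹ := by
  have h1 := denom_pos hR hk hkk (s * x)
  have h2 := denom_ge hR hk hkk (s * x)
  have h3 := sub_pos.2 (abs_lt_of_param hR hk hkk)
  rw [coshKer, ← div_eq_mul_inv, div_le_iff₀ h1, ← div_eq_inv_mul, le_div_iff₀ h3]
  linarith

lemma hasDerivAt_cosh_mul (s x : ℝ) :
    HasDerivAt (fun y => Real.cosh (s * y)) (s * Real.sinh (s * x)) x := by
  have := ((hasDerivAt_id x).const_mul s).cosh
  simpa [mul_comm] using this

lemma hasDerivAt_sinh_mul (s x : ℝ) :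
    HasDerivAt (fun y => Real.sinh (s * y)) (s * Real.cosh (s * x)) x := by
  have := ((hasDerivAt_id x).const_mul s).sinh
  simpa [mul_comm] using this

lemma hasDerivAt_coshKer (hR : 0 < R) (hk : 0 < k) (hkk : k ^ 2 = R ^ 2 - w ^ 2) (x : ℝ) :
    HasDerivAt (coshKer R w s) (-(R * s * Real.sinh (s * x) * coshKer R w s x ^ 2)) x := by
  have h := (((hasDerivAt_cosh_mul s x).const_mul R).sub_const w).fun_inv
    (denom_pos hR hk hkk (s * x)).ne'
  refine h.congr_deriv ?_
  rw [coshKer, inv_pow]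
  ring

lemma hasDerivAt_coshKerPrim (hR : 0 < R) (hs : 0 < s) (hk : 0 < k)
    (hkk : k ^ 2 = R ^ 2 - w ^ 2) (x : ℝ) :
    HasDerivAt (coshKerPrim R w s k) (coshKer R w s x) x := by
  have hC := Real.cosh_pos (s / 2 * x)
  have h := ((((hasDerivAt_sinh_mul (s / 2) x).div (hasDerivAt_cosh_mul (s / 2) x) hC.ne').const_mul
    ((R + w) / k)).arctan).const_mul (2 / (s * k))
  have h2 := denom_pos hR hk hkk (s * x)
  have hlt := abs_lt.1 (abs_lt_of_param hR hk hkk)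
  have hRw : 0 < R + w := by linarith
  have hc : Real.cosh (s * x) = Real.cosh (s / 2 * x) ^ 2 + Real.sinh (s / 2 * x) ^ 2 := by
    rw [← Real.cosh_two_mul]; congr 1; ring
  have hcs := Real.cosh_sq (s / 2 * x)
  have hfun : coshKerPrim R w s k = fun y => 2 / (s * k) *
      Real.arctan ((R + w) / k * (Real.sinh (s / 2 * y) / Real.cosh (s / 2 * y))) := by
    funext y
    rw [coshKerPrim, Real.tanh_eq_sinh_div_cosh]
  rw [hfun]
  refine h.congr_deriv ?_
  rw [coshKer]
  rw [hc] at h2 ⊢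
  set C := Real.cosh (s / 2 * x)
  set S := Real.sinh (s / 2 * x)
  have e1 : s / 2 * C * C - S * (s / 2 * S) = s / 2 := by
    linear_combination (s / 2) * hcs
  -- the half-angle form of the denominator, multiplied by `R + w`
  have e2 : k ^ 2 * C ^ 2 + (R + w) ^ 2 * S ^ 2 = (R + w) * (R * (C ^ 2 + S ^ 2) - w) := by
    rw [hkk]; linear_combination (-(R + w) * w) * hcs
  have hpos : 0 < k ^ 2 * C ^ 2 + (R + w) ^ 2 * S ^ 2 := by positivity
  have e3 : 1 + ((R + w) / k * (S / C)) ^ 2 =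
      ((R + w) * (R * (C ^ 2 + S ^ 2) - w)) / (k ^ 2 * C ^ 2) := by
    rw [← e2]; field_simp
  simp only [Pi.div_apply]
  change 2 / (s * k) * (1 / (1 + ((R + w) / k * (S / C)) ^ 2) *
    ((R + w) / k * ((s / 2 * C * C - S * (s / 2 * S)) / C ^ 2))) = _
  rw [e1, e3]
  have h2' := h2.ne'
  field_simp

lemma tendsto_coshKerPrim_atTop (hs : 0 < s) :
    Tendsto (coshKerPrim R w s k) atTop (𝓝 (2 / (s * k) * Real.arctan ((R + w) / k))) := by
  have h1 : Tendsto (fun x : ℝ => s / 2 * x) atTop atTop :=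
    tendsto_id.const_mul_atTop (half_pos hs)
  have h2 := ((tendsto_tanh_atTop'.comp h1).const_mul ((R + w) / k))
  have h3 := ((Real.continuous_arctan.tendsto _).comp h2).const_mul (2 / (s * k))
  rw [mul_one] at h3
  exact h3

lemma tendsto_coshKerPrim_atBot (hs : 0 < s) :
    Tendsto (coshKerPrim R w s k) atBot (𝓝 (-(2 / (s * k) * Real.arctan ((R + w) / k)))) :=
  tendsto_atBot_of_odd (fun x => by simp [coshKerPrim, Real.tanh_neg, Real.arctan_neg])
    (tendsto_coshKerPrim_atTop hs)

lemma continuous_coshKer (hR : 0 < R) (hk : 0 < k) (hkk : k ^ 2 = R ^ 2 - w ^ 2) :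
    Continuous (coshKer R w s) :=
  continuous_iff_continuousAt.2 fun x => (hasDerivAt_coshKer hR hk hkk x).continuousAt

lemma integrable_coshKer (hR : 0 < R) (hs : 0 < s) (hk : 0 < k) (hkk : k ^ 2 = R ^ 2 - w ^ 2) :
    Integrable (coshKer R w s) := by
  have h : IntegrableOn (coshKer R w s) (Set.Ioi 0) :=
    integrableOn_Ioi_deriv_of_nonneg' (fun x _ => hasDerivAt_coshKerPrim hR hs hk hkk x)
      (fun x _ => (coshKer_pos hR hk hkk x).le) (tendsto_coshKerPrim_atTop hs)
  have h' : IntegrableOn (coshKer R w s) (Set.Iic 0) := by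
    rw [integrableOn_Iic_iff_integrableOn_Iio]
    have heven : (fun x => coshKer R w s (-x)) = coshKer R w s := by
      funext x
      simp [coshKer]
    simpa [heven] using h.comp_neg
  rw [← integrableOn_univ, ← Set.Iic_union_Ioi (a := (0 : ℝ))]
  exact h'.union h

lemma integrable_coshKer_sq (hR : 0 < R) (hs : 0 < s) (hk : 0 < k) (hkk : k ^ 2 = R ^ 2 - w ^ 2) :
    Integrable (fun x => coshKer R w s x ^ 2) := by
  have := (integrable_coshKer hR hs hk hkk).bdd_mul (c := (R - |w|)⁻¹)
    (continuous_coshKer (s := s) hR hk hkk).aestronglyMeasurable (.of_forall fun x => ?_)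
  · simpa [sq] using this
  · have h0 := coshKer_pos (s := s) hR hk hkk x
    rw [Real.norm_of_nonneg h0.le]
    refine le_trans ?_ (cosh_mul_coshKer_le (s := s) hR hk hkk x)
    nlinarith [Real.one_le_cosh (s * x)]

lemma integrable_sinh_mul_coshKer_sq (hR : 0 < R) (hs : 0 < s) (hk : 0 < k)
    (hkk : k ^ 2 = R ^ 2 - w ^ 2) :
    Integrable (fun x => Real.sinh (s * x) * coshKer R w s x ^ 2) := by
  have hc := continuous_coshKer (s := s) hR hk hkk
  have := (integrable_coshKer hR hs hk hkk).bdd_mul (c := (R - |w|)⁻¹)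
    (f := fun x => Real.sinh (s * x) * coshKer R w s x)
    (by fun_prop) (.of_forall fun x => ?_)
  · refine this.congr (.of_forall fun x => ?_)
    simp only
    ring
  · have h0 := coshKer_pos (s := s) hR hk hkk x
    rw [norm_mul, Real.norm_of_nonneg h0.le, Real.norm_eq_abs]
    refine le_trans ?_ (cosh_mul_coshKer_le (s := s) hR hk hkk x)
    refine mul_le_mul_of_nonneg_right ?_ h0.le
    rw [← Real.cosh_abs, Real.abs_sinh]
    exact (Real.sinh_lt_cosh _).le

lemma integral_coshKer (hR : 0 < R) (hs : 0 < s) (hk : 0 < k) (hkk : k ^ 2 = R ^ 2 - w ^ 2) :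
    ∫ x, coshKer R w s x = 4 / (s * k) * Real.arctan ((R + w) / k) := by
  rw [integral_of_hasDerivAt_of_tendsto (hasDerivAt_coshKerPrim hR hs hk hkk)
    (integrable_coshKer hR hs hk hkk) (tendsto_coshKerPrim_atBot hs) (tendsto_coshKerPrim_atTop hs)]
  ring

/-- `∫ g²` in terms of `∫ g`: the integral of the derivative of
`sinh (s x) / (R cosh (s x) - w)`, whose limits at `±∞` are `±1/R`. -/
lemma integral_coshKer_sq (hR : 0 < R) (hs : 0 < s) (hk : 0 < k) (hkk : k ^ 2 = R ^ 2 - w ^ 2) :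
    k ^ 2 * ∫ x, coshKer R w s x ^ 2 = 2 / s + w * ∫ x, coshKer R w s x := by
  have hd : ∀ x, HasDerivAt (fun y => Real.sinh (s * y) * coshKer R w s y)
      (s / R * (k ^ 2 * coshKer R w s x ^ 2 - w * coshKer R w s x)) x := by
    intro x
    refine ((hasDerivAt_sinh_mul s x).mul (hasDerivAt_coshKer hR hk hkk x)).congr_deriv ?_
    have hp := denom_pos hR hk hkk (s * x)
    have hsq := Real.sinh_sq (s * x)
    rw [coshKer, hkk]
    have hp' := hp.ne'
    field_simp
    rw [hsq]
    ring
  have ht : Tendsto (fun y => Real.sinh (s * y) * coshKer R w s y) atTop (𝓝 (1 / R)) := by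
    have h1 : Tendsto (fun x : ℝ => s * x) atTop atTop := tendsto_id.const_mul_atTop hs
    have h2 := tendsto_tanh_atTop'.comp h1
    have h3 := (tendsto_cosh_atTop'.comp h1).inv_tendsto_atTop
    have h4 := h2.div (tendsto_const_nhds.sub (h3.const_mul w)) (b := R - w * 0)
      (by simpa using hR.ne')
    rw [mul_zero, sub_zero] at h4
    refine h4.congr fun x => ?_
    have hc := Real.cosh_pos (s * x)
    have hp := (denom_pos hR hk hkk (s * x)).ne'
    have : R - w * (Real.cosh (s * x))⁻¹ = (R * Real.cosh (s * x) - w) / Real.cosh (s * x) := by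
      field_simp
    simp only [Pi.div_apply, Function.comp_apply, Pi.inv_apply, coshKer, Real.tanh_eq_sinh_div_cosh]
    rw [this]
    field_simp
  have hb := tendsto_atBot_of_odd (fun x => by simp [coshKer]) ht
  have i1 := (integrable_coshKer_sq hR hs hk hkk).const_mul (k ^ 2)
  have i2 := (integrable_coshKer hR hs hk hkk).const_mul w
  have h := integral_of_hasDerivAt_of_tendsto hd ((i1.sub i2).const_mul (s / R)) hb ht
  rw [integral_const_mul, integral_sub i1 i2, integral_const_mul, integral_const_mul] at h
  field_simp at h ⊢
  linarith

end Kernel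

/-- The density of `Q₁` for `v = p e^{iθ}` with `θ' = w/2 - p²/4`. Only its imaginary part involves
`p'`. -/
lemma density_eq {p P : ℝ → ℝ} {p' w x : ℝ} (hp : HasDerivAt p p' x)
    (hP : HasDerivAt P (p x ^ 2) x) :
    Complex.I * deriv (fun y : ℝ => (p y : ℂ) *
        Complex.exp (Complex.I * (w / 2) * y - (Complex.I / 4) * (P y : ℝ))) x *
      (starRingEnd ℂ) ((p x : ℂ) *
        Complex.exp (Complex.I * (w / 2) * x - (Complex.I / 4) * (P x : ℝ))) =
      ((1 / 4 * (p x ^ 2) ^ 2 - w / 2 * p x ^ 2 : ℝ) : ℂ) + Complex.I * ((p x * p' : ℝ) : ℂ) := by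
  have h1 : HasDerivAt (fun y : ℝ => Complex.I * (w / 2) * y - (Complex.I / 4) * (P y : ℝ))
      (Complex.I * (w / 2) * (1 : ℝ) - (Complex.I / 4) * ((p x ^ 2 : ℝ) : ℂ)) x :=
    ((hasDerivAt_id x).ofReal_comp.const_mul _).sub (hP.ofReal_comp.const_mul _)
  have h2 := (hp.ofReal_comp.mul h1.cexp).deriv
  have h3 : Complex.exp (Complex.I * (w / 2) * x - (Complex.I / 4) * (P x : ℝ)) *
      (starRingEnd ℂ) (Complex.exp (Complex.I * (w / 2) * x - (Complex.I / 4) * (P x : ℝ))) = 1 := by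
    rw [← Complex.exp_conj, ← Complex.exp_add, ← Complex.exp_zero]
    congr 1
    simp only [map_sub, map_mul, map_div₀, Complex.conj_I, Complex.conj_ofReal, Complex.conj_ofNat]
    ring
  change Complex.I * deriv ((fun y : ℝ => (p y : ℂ)) * fun y : ℝ =>
    Complex.exp (Complex.I * (w / 2) * y - (Complex.I / 4) * (P y : ℝ))) x * _ = _
  rw [h2, map_mul, Complex.conj_ofReal]
  set E := Complex.exp (Complex.I * (w / 2) * x - (Complex.I / 4) * (P x : ℝ))
  push_cast
  linear_combination (Complex.I * p x * p' +
    Complex.I * p x ^ 2 * (Complex.I * (w / 2) - Complex.I / 4 * p x ^ 2)) * h3 +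
    (p x ^ 2 * (w / 2) - p x ^ 4 / 4 : ℂ) * Complex.I_sq

theorem stmt3 (b : ℝ) (hb : 0 < b) (ω₀ ω₁ : ℝ) (hΩ : ω₁ ^ 2 < 4 * ω₀) :
    Q1 (phi b ω₀ ω₁) =
      (gam b) ^ (-(3 : ℝ) / 2) *
        (Real.sqrt (gam b * (4 * ω₀ - ω₁ ^ 2)) -
          2 * (gam b - 1) * ω₁ *
            Real.arctan ((ω₁ + Real.sqrt (ω₁ ^ 2 + gam b * (4 * ω₀ - ω₁ ^ 2))) /
              Real.sqrt (gam b * (4 * ω₀ - ω₁ ^ 2)))) := by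
  have hγ : 0 < gam b := by unfold gam; positivity
  have hγD : 0 < gam b * (4 * ω₀ - ω₁ ^ 2) := mul_pos hγ (sub_pos.2 hΩ)
  have hs : 0 < Real.sqrt (4 * ω₀ - ω₁ ^ 2) := Real.sqrt_pos.2 (sub_pos.2 hΩ)
  have hk : 0 < Real.sqrt (gam b * (4 * ω₀ - ω₁ ^ 2)) := Real.sqrt_pos.2 hγD
  have hR : 0 < Real.sqrt (ω₁ ^ 2 + gam b * (4 * ω₀ - ω₁ ^ 2)) :=
    Real.sqrt_pos.2 (by positivity)
  have hs2 : Real.sqrt (4 * ω₀ - ω₁ ^ 2) ^ 2 = 4 * ω₀ - ω₁ ^ 2 :=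
    Real.sq_sqrt (sub_pos.2 hΩ).le
  have hkk : Real.sqrt (gam b * (4 * ω₀ - ω₁ ^ 2)) ^ 2 =
      Real.sqrt (ω₁ ^ 2 + gam b * (4 * ω₀ - ω₁ ^ 2)) ^ 2 - ω₁ ^ 2 := by
    rw [Real.sq_sqrt hγD.le, Real.sq_sqrt (by positivity)]
    ring
  have hks : Real.sqrt (gam b * (4 * ω₀ - ω₁ ^ 2)) =
      Real.sqrt (gam b) * Real.sqrt (4 * ω₀ - ω₁ ^ 2) := Real.sqrt_mul hγ.le _
  have hphi : phi b ω₀ ω₁ = fun x : ℝ => (phit b ω₀ ω₁ x : ℂ) *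
    Complex.exp (Complex.I * (ω₁ / 2) * x -
      (Complex.I / 4) * ((∫ η in Set.Iic x, (phit b ω₀ ω₁ η) ^ 2) : ℝ)) := rfl
  have hfun : phit b ω₀ ω₁ = fun x => Real.sqrt (2 * (4 * ω₀ - ω₁ ^ 2) *
      coshKer (Real.sqrt (ω₁ ^ 2 + gam b * (4 * ω₀ - ω₁ ^ 2))) ω₁
        (Real.sqrt (4 * ω₀ - ω₁ ^ 2)) x) := by
    funext x
    rw [phit, coshKer, div_eq_mul_inv, neg_add_eq_sub]
  set s := Real.sqrt (4 * ω₀ - ω₁ ^ 2)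
  set R := Real.sqrt (ω₁ ^ 2 + gam b * (4 * ω₀ - ω₁ ^ 2))
  set k := Real.sqrt (gam b * (4 * ω₀ - ω₁ ^ 2))
  rw [← hs2] at hfun
  have hpos : ∀ x, 0 < 2 * s ^ 2 * coshKer R ω₁ s x := fun x =>
    mul_pos (by positivity) (coshKer_pos hR hk hkk x)
  have hsq : ∀ x, phit b ω₀ ω₁ x ^ 2 = 2 * s ^ 2 * coshKer R ω₁ s x := fun x => by
    rw [hfun]
    exact Real.sq_sqrt (hpos x).le
  have hP : ∀ x, HasDerivAt (fun y => ∫ η in Set.Iic y, phit b ω₀ ω₁ η ^ 2)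
      (phit b ω₀ ω₁ x ^ 2) x := by
    intro x
    have h1 : (fun y => ∫ η in Set.Iic y, phit b ω₀ ω₁ η ^ 2) = fun y => 2 * s ^ 2 *
        (coshKerPrim R ω₁ s k y - -(2 / (s * k) * Real.arctan ((R + ω₁) / k))) := by
      funext y
      simp only [hsq]
      rw [integral_const_mul, integral_Iic_of_hasDerivAt_of_tendsto'
        (fun x _ => hasDerivAt_coshKerPrim hR hs hk hkk x)
        (integrable_coshKer hR hs hk hkk).integrableOn (tendsto_coshKerPrim_atBot hs)]
    rw [h1, hsq]
    exact ((hasDerivAt_coshKerPrim hR hs hk hkk x).sub_const _).const_mul _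
  have hp : ∀ x, HasDerivAt (phit b ω₀ ω₁)
      (2 * s ^ 2 * -(R * s * Real.sinh (s * x) * coshKer R ω₁ s x ^ 2) /
        (2 * phit b ω₀ ω₁ x)) x := by
    intro x
    have := ((hasDerivAt_coshKer (s := s) hR hk hkk x).const_mul (2 * s ^ 2)).sqrt (hpos x).ne'
    rw [hfun]
    exact this
  have hp0 : ∀ x, phit b ω₀ ω₁ x ≠ 0 := fun x h => by
    have := hsq x
    rw [h] at this
    linarith [hpos x]
  have i1 := integrable_coshKer hR hs hk hkk
  have i2 := integrable_coshKer_sq hR hs hk hkk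
  have i3 := integrable_sinh_mul_coshKer_sq hR hs hk hkk
  have hdens : ∀ x, Complex.I * deriv (phi b ω₀ ω₁) x * (starRingEnd ℂ) (phi b ω₀ ω₁ x) =
      ((s ^ 4 * coshKer R ω₁ s x ^ 2 - ω₁ * s ^ 2 * coshKer R ω₁ s x : ℝ) : ℂ) +
      Complex.I * ((-(s ^ 3 * R) * (Real.sinh (s * x) * coshKer R ω₁ s x ^ 2) : ℝ) : ℂ) := by
    intro x
    rw [hphi]
    refine (density_eq (hp x) (hP x)).trans ?_
    rw [hsq]
    have e : phit b ω₀ ω₁ x * (2 * s ^ 2 * -(R * s * Real.sinh (s * x) * coshKer R ω₁ s x ^ 2) /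
        (2 * phit b ω₀ ω₁ x)) = -(s ^ 3 * R) * (Real.sinh (s * x) * coshKer R ω₁ s x ^ 2) := by
      have := hp0 x
      field_simp
    rw [e]
    congr 2
    ring
  have j1 : Integrable (fun x =>
      s ^ 4 * coshKer R ω₁ s x ^ 2 - ω₁ * s ^ 2 * coshKer R ω₁ s x) :=
    (i2.const_mul _).sub (i1.const_mul _)
  have j2 := i3.const_mul (-(s ^ 3 * R))
  have hre : (∫ x : ℝ, Complex.I * deriv (phi b ω₀ ω₁) x * (starRingEnd ℂ) (phi b ω₀ ω₁ x)).re =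
      s ^ 4 * (∫ x, coshKer R ω₁ s x ^ 2) - ω₁ * s ^ 2 * ∫ x, coshKer R ω₁ s x := by
    have j : Integrable fun x => Complex.I * deriv (phi b ω₀ ω₁) x *
        (starRingEnd ℂ) (phi b ω₀ ω₁ x) := by
      simp only [hdens]
      exact (Complex.ofRealCLM.integrable_comp j1).add
        ((Complex.ofRealCLM.integrable_comp j2).const_mul Complex.I)
    have h := Complex.reCLM.integral_comp_comm j
    simp only [Complex.reCLM_apply] at h
    rw [← h, ← integral_const_mul, ← integral_const_mul,
      ← integral_sub (i2.const_mul _) (i1.const_mul _)]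
    refine integral_congr_ae (.of_forall fun x => ?_)
    simp only [hdens, Complex.add_re, Complex.ofReal_re, Complex.I_mul_re, Complex.ofReal_im,
      neg_zero, add_zero]
  have hI := integral_coshKer_sq hR hs hk hkk
  rw [integral_coshKer hR hs hk hkk] at hI hre
  have hI' : ∫ x, coshKer R ω₁ s x ^ 2 =
      (2 / s + ω₁ * (4 / (s * k) * Real.arctan ((R + ω₁) / k))) / k ^ 2 := by
    rw [← hI]
    field_simp
  rw [Q1, hre, hI', add_comm ω₁ R]
  have hpow : gam b ^ (-(3 : ℝ) / 2) = (Real.sqrt (gam b) ^ 3)⁻¹ := by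
    rw [neg_div, Real.rpow_neg hγ.le, Real.sqrt_eq_rpow, ← Real.rpow_natCast,
      ← Real.rpow_mul hγ.le]
    norm_num
  have hg : gam b = Real.sqrt (gam b) ^ 2 := (Real.sq_sqrt hγ.le).symm
  have hgp : 0 < Real.sqrt (gam b) := Real.sqrt_pos.2 hγ
  rw [hpow]
  generalize Real.arctan ((R + ω₁) / k) = a
  generalize Real.sqrt (gam b) = q at hg hgp hks ⊢
  rw [hg, hks]
  field_simp
  ring

end
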